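/- arXiv:2110.13146 — 6 statements merged into one kernel-verified Lean document; each statement's English description precedes it below -/
import Mathlib

section
/- Let F be a field, n a natural number, and A an n×n matrix over F. Then the rank of A is at most the matching number of its support; that is, rank A ≤ the largest cardinality k for which there exist a set s of row indices with |s| = k and a function σ from row indices to column indices that is injective on s and satisfies A i (σ i) ≠ 0 for all i ∈ s. -/
/-!
If the rows `I` and columns `J` together cover the support of `A`, then `A = B * C` where the
nonzero rows of `C` are indexed by `I ⊕ J`, so `rank A ≤ #I + #J`. For a set `u` of rows, the
support is covered by the rows outside `u` and the columns adjacent to `u`; hence `u` exceeds its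
set of neighbours by at most the number of rows minus `rank A`. By the deficiency version of
Hall's theorem there is then a partial matching missing at most that many rows.
-/

open Finset Function

/-- Ore's deficiency version of Hall's marriage theorem. -/
theorem exists_injective_of_card_le_card_biUnion_add {ι α : Type*} [Fintype ι] [DecidableEq α]
    (t : ι → Finset α) (d : ℕ) (hall : ∀ u : Finset ι, #u ≤ #(u.biUnion t) + d) :
    ∃ (s : Finset ι) (f : s → α),
      Injective f ∧ (∀ i : s, f i ∈ t i) ∧ Fintype.card ι ≤ #s + d := by
  classical
  -- Adjoin `d` dummy elements to every `t i`; at most `d` indices are matched to dummies.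
  let t' (i : ι) : Finset (α ⊕ Fin d) := (t i).disjSum univ
  have hall' (u : Finset ι) : #u ≤ #(u.biUnion t') := by
    obtain rfl | ⟨i, hi⟩ := u.eq_empty_or_nonempty
    · simp
    have hsub : (u.biUnion t).disjSum univ ⊆ u.biUnion t' := by
      rintro (a | k) h
      · simpa [t'] using h
      · simpa [t'] using ⟨i, hi⟩
    calc #u ≤ #((u.biUnion t).disjSum (univ : Finset (Fin d))) := by simpa using hall u
      _ ≤ #(u.biUnion t') := card_le_card hsub
  obtain ⟨g, g_inj, hg⟩ := (all_card_le_biUnion_card_iff_exists_injective t').1 hall'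
  let s : Finset ι := {i | (g i).isLeft}
  have left (i : s) : ∃ a, g i = .inl a := Sum.isLeft_iff.1 (mem_filter.1 i.2).2
  choose f hf using left
  refine ⟨s, f, fun i j hij ↦ ?_, fun i ↦ ?_, ?_⟩
  · exact Subtype.ext (g_inj (by rw [hf, hf, hij]))
  · simpa [t', hf] using hg i
  · have dummies : #sᶜ ≤ d := by
      have hmaps : ∀ i ∈ sᶜ, g i ∈ (univ : Finset (Fin d)).map .inr := by
        intro i hi
        cases h : g i <;> simp_all [s]
      simpa using card_le_card_of_injOn g hmaps g_inj.injOn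
    have := card_add_card_compl s
    lia

theorem exists_injOn_iff_exists_injective {α β : Type*} [Nonempty (α → β)] (s : Finset α)
    (r : α → β → Prop) :
    (∃ σ : α → β, Set.InjOn σ s ∧ ∀ i ∈ s, r i (σ i)) ↔
      ∃ σ : s → β, Injective σ ∧ ∀ i : s, r i (σ i) := by
  constructor
  · rintro ⟨σ, σ_inj, hσ⟩
    exact ⟨fun i ↦ σ i, σ_inj.injective, fun i ↦ hσ i i.2⟩
  · rintro ⟨σ, σ_inj, hσ⟩
    have extend_eq (i : s) : extend Subtype.val σ (Classical.arbitrary (α → β)) i = σ i :=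
      Subtype.val_injective.extend_apply _ _ i
    refine ⟨extend Subtype.val σ (Classical.arbitrary _), fun i hi j hj hij ↦ ?_, fun i hi ↦ ?_⟩
    · rw [extend_eq ⟨i, hi⟩, extend_eq ⟨j, hj⟩] at hij
      exact congrArg Subtype.val (σ_inj hij)
    · simpa only [extend_eq ⟨i, hi⟩] using hσ ⟨i, hi⟩

section Matrix

variable {R m n : Type*} [CommSemiring R] [StrongRankCondition R] [Finite m] [Fintype n]

theorem rank_le_card_add_card_of_support_covered (A : Matrix m n R) (I : Finset m) (J : Finset n)
    (cover : ∀ i j, A i j ≠ 0 → i ∈ I ∨ j ∈ J) : A.rank ≤ #I + #J := by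
  classical
  cases nonempty_fintype m
  let B : Matrix m (m ⊕ n) R := .fromCols 1 (.of fun i j ↦ if i ∈ I then 0 else A i j)
  let C : Matrix (m ⊕ n) n R :=
    .fromRows (.of fun i j ↦ if i ∈ I then A i j else 0) (.diagonal fun j ↦ if j ∈ J then 1 else 0)
  have factor : A = B * C := by
    ext i j
    have zero_outside (hi : i ∉ I) (hj : j ∉ J) : A i j = 0 := by
      by_contra h
      exact (cover i j h).elim hi hj
    simp only [B, C, Matrix.fromCols_mul_fromRows, Matrix.one_mul, Matrix.add_apply,
      Matrix.of_apply, Matrix.mul_diagonal]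
    split_ifs with hi hj <;> simp [*]
  have rows_C : support C.row ⊆ I.disjSum J := by
    rw [support_subset_iff']
    rintro (i | j) h <;> ext k
    · have hi : i ∉ I := by simpa using h
      simp [C, hi]
    · have hj : j ∉ J := by simpa using h
      simp [C, hj, Matrix.diagonal_apply]
  calc A.rank = (B * C).rank := by rw [← factor]
    _ ≤ C.rank := Matrix.rank_mul_le_right B C
    _ ≤ #(I.disjSum J) := C.rank_le_card_of_support_subset _ rows_C
    _ = #I + #J := card_disjSum I J

theorem exists_matching_rank_le_card (A : Matrix m n R) :
    ∃ (s : Finset m) (σ : s → n), Injective σ ∧ (∀ i : s, A i (σ i) ≠ 0) ∧ A.rank ≤ #s := by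
  classical
  cases nonempty_fintype m
  let N (i : m) : Finset n := {j | A i j ≠ 0}
  have hall (u : Finset m) : #u ≤ #(u.biUnion N) + (Fintype.card m - A.rank) := by
    have cover : A.rank ≤ #uᶜ + #(u.biUnion N) := by
      refine rank_le_card_add_card_of_support_covered A _ _ fun i j hij ↦ ?_
      by_cases hi : i ∈ u
      · exact .inr (mem_biUnion.2 ⟨i, hi, by simpa [N] using hij⟩)
      · exact .inl (mem_compl.2 hi)
    have := card_add_card_compl u
    lia
  obtain ⟨s, σ, σ_inj, hσ, hs⟩ := exists_injective_of_card_le_card_biUnion_add N _ hall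
  have := A.rank_le_card_height
  exact ⟨s, σ, σ_inj, fun i ↦ by simpa [N] using hσ i, by lia⟩

-- `σ` is defined only on `s`: if there are rows but no columns, no map `m → n` exists.
theorem rank_le_matching_number_general (A : Matrix m n R) :
    A.rank ≤ sSup {k : ℕ | ∃ (s : Finset m) (σ : s → n),
      #s = k ∧ Injective σ ∧ ∀ i : s, A i (σ i) ≠ 0} := by
  cases nonempty_fintype m
  obtain ⟨s, σ, σ_inj, hσ, hs⟩ := exists_matching_rank_le_card A
  refine le_csSup_of_le ⟨Fintype.card m, ?_⟩ ⟨s, σ, rfl, σ_inj, hσ⟩ hs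
  rintro _ ⟨s, -, rfl, -⟩
  exact s.card_le_univ

end Matrix

/-- The rank of an `n × n` matrix over a field is at most the matching number
(term rank) of its support: the largest `k` such that there are a set `s` of
row indices of cardinality `k` and a map `σ` injective on `s` with
`A i (σ i) ≠ 0` for all `i ∈ s`. -/
theorem rank_le_matching_number {F : Type*} [Field F] {n : ℕ}
    (A : Matrix (Fin n) (Fin n) F) :
    A.rank ≤ sSup {k : ℕ | ∃ (s : Finset (Fin n)) (σ : Fin n → Fin n),
      s.card = k ∧ Set.InjOn σ ↑s ∧ ∀ i ∈ s, A i (σ i) ≠ 0} := by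
  have : Nonempty (Fin n → Fin n) := ⟨id⟩
  simpa only [exists_and_left, exists_injOn_iff_exists_injective _ fun i j ↦ A i j ≠ 0]
    using rank_le_matching_number_general A
end

section
/- Let F be a field, n a natural number, and P a zero–nonzero pattern on n×n positions (a predicate P : indices × indices → Prop). If P admits a partial matching of size k — i.e., there exist a set s of row indices with |s| = k and a function σ injective on s with P i (σ i) for all i ∈ s — then there exists an n×n matrix A over F whose support is contained in P (A i j ≠ 0 only if P i j) and whose rank is at least k. -/
section MatchingMatrix

variable {m n : Type*} [DecidableEq m] [DecidableEq n]

/-- The indicator matrix of the partial matching `{(i, σ i) | i ∈ s}`, which realizes its size as a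
rank. The map `σ` is total, but only its values on `s` matter. -/
def matchingMatrix (R : Type*) [Zero R] [One R] (s : Finset m) (σ : m → n) : Matrix m n R :=
  Matrix.of fun i j ↦ if i ∈ s ∧ σ i = j then 1 else 0

variable {R : Type*}

theorem matchingMatrix_apply [Zero R] [One R] (s : Finset m) (σ : m → n) (i : m) (j : n) :
    matchingMatrix R s σ i j = if i ∈ s ∧ σ i = j then 1 else 0 :=
  rfl

theorem mem_and_eq_of_matchingMatrix_apply_ne_zero [Zero R] [One R] {s : Finset m} {σ : m → n}
    {i : m} {j : n} (h : matchingMatrix R s σ i j ≠ 0) : i ∈ s ∧ σ i = j := by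
  by_contra hij
  exact h (if_neg hij)

theorem submatrix_matchingMatrix_eq_one [Zero R] [One R] {s : Finset m} {σ : m → n}
    (hσ : Set.InjOn σ s) :
    (matchingMatrix R s σ).submatrix (Subtype.val : s → m) (fun i : s ↦ σ i) = 1 := by
  ext i j
  have h_iff : σ i = σ j ↔ i = j := hσ.injective.eq_iff
  simp [matchingMatrix_apply, Matrix.one_apply, h_iff]

theorem card_le_rank_matchingMatrix [CommSemiring R] [StrongRankCondition R] [Fintype n]
    {s : Finset m} {σ : m → n} (hσ : Set.InjOn σ s) :
    s.card ≤ (matchingMatrix R s σ).rank :=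
  calc
    s.card = (1 : Matrix s s R).rank := by rw [Matrix.rank_one, Fintype.card_coe]
    _ = ((matchingMatrix R s σ).submatrix (Subtype.val : s → m) fun i : s ↦ σ i).rank := by
      rw [submatrix_matchingMatrix_eq_one hσ]
    _ ≤ (matchingMatrix R s σ).rank := Matrix.rank_submatrix_le _ _ _

end MatchingMatrix

theorem exists_matrix_supported_on_pattern_rank_ge_general {R m n : Type*} [CommSemiring R]
    [StrongRankCondition R] [Fintype n] (P : m → n → Prop) (s : Finset m) (σ : m → n)
    (hinj : Set.InjOn σ s) (hP : ∀ i ∈ s, P i (σ i)) :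
    ∃ A : Matrix m n R, (∀ i j, A i j ≠ 0 → P i j) ∧ s.card ≤ A.rank := by
  classical
  refine ⟨matchingMatrix R s σ, fun i j hij ↦ ?_, card_le_rank_matchingMatrix hinj⟩
  obtain ⟨hi, rfl⟩ := mem_and_eq_of_matchingMatrix_apply_ne_zero hij
  exact hP i hi

/-- If a zero–nonzero pattern `P` on `n × n` positions admits a partial matching
of size `k` (a set `s` of `k` row indices and a map `σ` injective on `s` with
`P i (σ i)` for all `i ∈ s`), then over any field `F` there is an `n × n` matrix
supported on `P` whose rank is at least `k`. -/
theorem exists_matrix_supported_on_pattern_rank_ge {F : Type*} [Field F] {n k : ℕ}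
    (P : Fin n → Fin n → Prop) (s : Finset (Fin n)) (σ : Fin n → Fin n)
    (hcard : s.card = k) (hinj : Set.InjOn σ ↑s) (hP : ∀ i ∈ s, P i (σ i)) :
    ∃ A : Matrix (Fin n) (Fin n) F, (∀ i j, A i j ≠ 0 → P i j) ∧ k ≤ A.rank :=
  hcard ▸ exists_matrix_supported_on_pattern_rank_ge_general P s σ hinj hP
end

section
/- Let n be a natural number and A an n×n matrix with real entries such that the family of nonzero entries of A is algebraically independent over ℚ. Then rank A equals the matching number of the support of A, i.e., the largest cardinality k for which there exist a set s of row indices with |s| = k and a function σ injective on s with A i (σ i) ≠ 0 for all i ∈ s. -/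
/-!
A matrix has rank at least `k` exactly when some `k × k` minor is nonzero. A nonzero minor has a
nonzero term in its Leibniz expansion, and that term is a matching of size `k` in the support.
Conversely, given a matching of size `k`, replace the nonzero entries by distinct indeterminates:
the minor on the rows and columns of the matching becomes a polynomial, which is nonzero because it
takes the value `1` when the matched variables are set to `1` and all others to `0`. Algebraic
independence says exactly that a nonzero polynomial does not vanish at the entries of the matrix.
-/

open Set

variable {ι m n α K R S : Type*}

section PartialMatching

/-- The support of `A` has a partial matching of size `k`. The matching is enumerated by `Fin k`:
its `i`-th edge joins row `r i` to column `c i`, so that `A.submatrix r c` is the square block on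
the matched rows and columns, with the matched entries on its diagonal. -/
def HasPartialMatching [Zero α] (A : Matrix m n α) (k : ℕ) : Prop :=
  ∃ (r : Fin k ↪ m) (c : Fin k ↪ n), ∀ i, A (r i) (c i) ≠ 0

/-- The matching number (term rank) of the support of `A`, which is `⊤` when the support has
partial matchings of every finite size. -/
noncomputable def matchingNumber [Zero α] (A : Matrix m n α) : ℕ∞ :=
  ⨆ (k : ℕ) (_ : HasPartialMatching A k), (k : ℕ∞)

variable [Zero α] {A : Matrix m n α} {k : ℕ}

theorem HasPartialMatching.le_natCard [Finite m] (h : HasPartialMatching A k) : k ≤ Nat.card m := by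
  obtain ⟨r, -⟩ := h
  simpa using Nat.card_le_card_of_injective r r.injective

theorem hasPartialMatching_iff_exists_finset [Nonempty (m → n)] :
    HasPartialMatching A k ↔ ∃ (s : Finset m) (σ : m → n),
      s.card = k ∧ InjOn σ ↑s ∧ ∀ i ∈ s, A i (σ i) ≠ 0 := by
  constructor
  · rintro ⟨r, c, hrc⟩
    obtain ⟨σ₀⟩ := ‹Nonempty (m → n)›
    have hσ (i : Fin k) : Function.extend r c σ₀ (r i) = c i := r.injective.extend_apply c σ₀ i
    refine ⟨Finset.univ.map r, Function.extend r c σ₀, by simp, ?_, by simpa [hσ] using hrc⟩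
    simp [InjOn, hσ]
  · rintro ⟨s, σ, rfl, hinj, hσ⟩
    let r : Fin s.card ↪ m := s.equivFin.symm.toEmbedding.trans (.subtype _)
    have hr (i) : r i ∈ s := (s.equivFin.symm i).2
    exact ⟨r, ⟨σ ∘ r, fun i j hij ↦ r.injective (hinj (hr i) (hr j) hij)⟩, fun i ↦ hσ _ (hr i)⟩

theorem natCast_sSup_card_eq_matchingNumber [Finite m] [Nonempty (m → n)] (A : Matrix m n α) :
    (sSup {k : ℕ | ∃ (s : Finset m) (σ : m → n),
      s.card = k ∧ InjOn σ ↑s ∧ ∀ i ∈ s, A i (σ i) ≠ 0} : ℕ) = matchingNumber A := by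
  simp only [← hasPartialMatching_iff_exists_finset]
  exact ENat.natCast_sSup ⟨Nat.card m, fun _ ↦ HasPartialMatching.le_natCard⟩

end PartialMatching

section Minors

theorem hasPartialMatching_of_det_submatrix_ne_zero [CommRing S] {A : Matrix m n S} {k : ℕ}
    {r : Fin k → m} {c : Fin k → n} (h : (A.submatrix r c).det ≠ 0) : HasPartialMatching A k := by
  have hr : r.Injective := fun i j hij ↦ by
    by_contra hne
    exact h (Matrix.det_zero_of_row_eq hne (by ext; simp [hij]))
  have hc : c.Injective := fun i j hij ↦ by
    by_contra hne
    exact h (Matrix.det_zero_of_column_eq hne (by simp [hij]))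
  rw [Matrix.det_apply] at h
  obtain ⟨τ, -, hτ⟩ := Finset.exists_ne_zero_of_sum_ne_zero h
  refine ⟨⟨r ∘ τ, hr.comp τ.injective⟩, ⟨c, hc⟩, fun i hi ↦ hτ ?_⟩
  rw [Finset.prod_eq_zero (Finset.mem_univ i) hi, smul_zero]

theorem exists_linearIndependent_comp_of_le_rank_span {V : Type*} [DivisionRing K]
    [AddCommGroup V] [Module K V] {v : ι → V} {k : ℕ}
    (hk : k ≤ Module.rank K (Submodule.span K (range v))) :
    ∃ a : Fin k → ι, LinearIndependent K (v ∘ a) := by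
  obtain ⟨t, ht, hspan, hli⟩ := exists_linearIndependent K (range v)
  rw [← hspan, rank_span_set hli] at hk
  obtain ⟨e⟩ : Nonempty (Fin k ↪ t) := by
    rwa [← Cardinal.lift_mk_le', Cardinal.mk_fin, Cardinal.lift_natCast, Cardinal.lift_uzero]
  choose a ha using fun i ↦ ht (e i).2
  have hva : v ∘ a = (↑) ∘ e := funext ha
  exact ⟨a, hva ▸ hli.comp e e.injective⟩

theorem natCast_rank_eq_eRank [CommSemiring S] [StrongRankCondition S] [Fintype n]
    (A : Matrix m n S) : (A.rank : ℕ∞) = A.eRank := by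
  have hfin : A.eRank ≠ ⊤ := ne_top_of_le_ne_top (by simp) A.eRank_le_card_width
  rw [A.rank_eq_finrank_span_cols, ← A.eRank_toNat_eq_finrank, ENat.natCast_toNat hfin]

theorem natCast_le_eRank_iff_exists_det_submatrix_ne_zero [Field K] {A : Matrix m n K} {k : ℕ} :
    k ≤ A.eRank ↔ ∃ (r : Fin k → m) (c : Fin k → n), (A.submatrix r c).det ≠ 0 := by
  constructor
  · intro hk
    obtain ⟨c, hc⟩ := exists_linearIndependent_comp_of_le_rank_span (v := A.col) (K := K)
      (Cardinal.natCast_le_toENat.1 hk)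
    have hrows : Submodule.span K (range (A.submatrix id c).row) = ⊤ :=
      span_flip_eq_top_iff_linearIndependent.2 hc
    obtain ⟨r, hr⟩ := exists_linearIndependent_comp_of_le_rank_span (K := K) (k := k)
      (v := (A.submatrix id c).row) (by rw [hrows]; simp)
    have hunit : IsUnit (A.submatrix r c) := Matrix.linearIndependent_rows_iff_isUnit.1 hr
    exact ⟨r, c, ((Matrix.isUnit_iff_isUnit_det _).1 hunit).ne_zero⟩
  · rintro ⟨r, c, hdet⟩
    calc (k : ℕ∞) = ((A.submatrix r c).rank : ℕ∞) := by simp [Matrix.rank_of_det_ne_zero hdet]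
      _ = (A.submatrix r c).eRank := natCast_rank_eq_eRank _
      _ ≤ A.eRank := A.eRank_submatrix_le r c

end Minors

section GenericMatrix

/-- Index type of the family of nonzero entries of `A`. -/
abbrev SupportIndex [Zero α] (A : Matrix m n α) : Type _ :=
  {p : m × n // A p.1 p.2 ≠ 0}

open Classical in
/-- The generic matrix with the same support as `A`: the nonzero entries of `A` are replaced by
distinct indeterminates over `R`. -/
noncomputable def genericMatrix (R : Type*) [CommSemiring R] [Zero α] (A : Matrix m n α) :
    Matrix m n (MvPolynomial (SupportIndex A) R) :=
  fun i j ↦ if h : A i j ≠ 0 then MvPolynomial.X ⟨(i, j), h⟩ else 0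

theorem genericMatrix_map_aeval [CommSemiring R] [CommSemiring S] [Algebra R S]
    (A : Matrix m n S) :
    (genericMatrix R A).map (MvPolynomial.aeval fun p : SupportIndex A ↦ A p.1.1 p.1.2) = A := by
  ext i j
  by_cases h : A i j = 0 <;> simp [genericMatrix, h]

variable [Fintype ι] [DecidableEq ι] [CommRing R] [Nontrivial R]

theorem det_submatrix_genericMatrix_ne_zero [Zero α] {A : Matrix m n α} {r : ι ↪ m} {c : ι ↪ n}
    (h : ∀ i, A (r i) (c i) ≠ 0) : ((genericMatrix R A).submatrix r c).det ≠ 0 := by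
  classical
  let matched : SupportIndex A → R := fun p ↦ if ∃ l, p.1 = (r l, c l) then 1 else 0
  have hone : (MvPolynomial.eval matched).mapMatrix ((genericMatrix R A).submatrix r c) = 1 := by
    ext i j
    by_cases hij : A (r i) (c j) = 0
    · have : i ≠ j := by rintro rfl; exact h i hij
      simp [genericMatrix, hij, this]
    · simp [genericMatrix, hij, matched, Matrix.one_apply, eq_comm]
  intro hzero
  have := congrArg Matrix.det hone
  rw [← RingHom.map_det, hzero, map_zero, Matrix.det_one] at this
  exact zero_ne_one this

theorem det_submatrix_ne_zero_of_algebraicIndependent [CommRing S] [Algebra R S]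
    {A : Matrix m n S} (hA : AlgebraicIndependent R fun p : SupportIndex A ↦ A p.1.1 p.1.2)
    {r : ι ↪ m} {c : ι ↪ n} (h : ∀ i, A (r i) (c i) ≠ 0) : (A.submatrix r c).det ≠ 0 := by
  have hmap : (MvPolynomial.aeval fun p : SupportIndex A ↦ A p.1.1 p.1.2).mapMatrix
      ((genericMatrix R A).submatrix r c) = A.submatrix r c :=
    congrArg (·.submatrix r c) (genericMatrix_map_aeval A)
  rw [← hmap, ← AlgHom.map_det, map_ne_zero_iff _ hA]
  exact det_submatrix_genericMatrix_ne_zero h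

end GenericMatrix

theorem natCast_le_eRank_iff_hasPartialMatching [Field K] [CommRing R] [Algebra R K]
    {A : Matrix m n K} (hA : AlgebraicIndependent R fun p : SupportIndex A ↦ A p.1.1 p.1.2)
    {k : ℕ} : k ≤ A.eRank ↔ HasPartialMatching A k := by
  have : Nontrivial R := (algebraMap R K).domain_nontrivial
  rw [natCast_le_eRank_iff_exists_det_submatrix_ne_zero]
  constructor
  · rintro ⟨r, c, hdet⟩
    exact hasPartialMatching_of_det_submatrix_ne_zero hdet
  · rintro ⟨r, c, hrc⟩
    exact ⟨r, c, det_submatrix_ne_zero_of_algebraicIndependent hA hrc⟩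

theorem rank_eq_matching_number_of_algebraicIndependent_general [Field K] [CommRing R]
    [Algebra R K] (A : Matrix m n K)
    (hA : AlgebraicIndependent R fun p : SupportIndex A ↦ A p.1.1 p.1.2) :
    A.eRank = matchingNumber A := by
  apply le_antisymm
  · refine ENat.forall_natCast_le_iff_le.1 fun k hk ↦ ?_
    exact le_iSup₂_of_le k ((natCast_le_eRank_iff_hasPartialMatching hA).1 hk) le_rfl
  · exact iSup₂_le fun k hk ↦ (natCast_le_eRank_iff_hasPartialMatching hA).2 hk

/-- If the nonzero entries of a real `n × n` matrix `A` form a family that is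
algebraically independent over `ℚ`, then the rank of `A` equals the matching
number (term rank) of its support. -/
theorem rank_eq_matching_number_of_algebraicIndependent {n : ℕ}
    (A : Matrix (Fin n) (Fin n) ℝ)
    (h : AlgebraicIndependent ℚ
      (fun p : {p : Fin n × Fin n // A p.1 p.2 ≠ 0} => A p.1.1 p.1.2)) :
    A.rank = sSup {k : ℕ | ∃ (s : Finset (Fin n)) (σ : Fin n → Fin n),
      s.card = k ∧ Set.InjOn σ ↑s ∧ ∀ i ∈ s, A i (σ i) ≠ 0} := by
  have : Nonempty (Fin n → Fin n) := ⟨id⟩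
  rw [← Nat.cast_inj (R := ℕ∞), natCast_rank_eq_eRank, natCast_sSup_card_eq_matchingNumber,
    rank_eq_matching_number_of_algebraicIndependent_general A h]
end

section
/- Let n be a natural number and A an n×n matrix with real entries such that the family of nonzero entries of A is algebraically independent over ℚ. If the support of A contains a perfect matching — a permutation σ of the row indices with A i (σ i) ≠ 0 for all i — then det A ≠ 0. -/
/-!
The determinant of `A` is the value at the nonzero entries of `A` of the determinant polynomial of
the generic matrix with the same support. That polynomial is nonzero, because substituting `1` for
the variables on the matching and `0` for the others yields a permutation matrix, and by algebraic
independence a nonzero polynomial does not vanish at the nonzero entries of `A`.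
-/

section GenericMatrix

variable {m n R S : Type*}

open Classical in
/-- The generic matrix with support in `s`: distinct variables at the positions in `s`, and zeros
elsewhere. The case `s = Set.univ` is `Matrix.mvPolynomialX`, up to reindexing the variables. -/
noncomputable def mvPolynomialXOn (R : Type*) [CommSemiring R] (s : Set (m × n)) :
    Matrix m n (MvPolynomial s R) :=
  Matrix.of fun i j => if h : (i, j) ∈ s then MvPolynomial.X ⟨(i, j), h⟩ else 0

theorem mvPolynomialXOn_map_aeval [CommSemiring R] [CommSemiring S] [Algebra R S]
    {s : Set (m × n)} {A : Matrix m n S} (hA : ∀ i j, (i, j) ∉ s → A i j = 0) :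
    (mvPolynomialXOn R s).map (MvPolynomial.aeval fun p : s => A p.1.1 p.1.2) = A := by
  ext i j
  by_cases hij : (i, j) ∈ s
  · simp [mvPolynomialXOn, hij]
  · simp [mvPolynomialXOn, hij, hA i j hij]

variable [Fintype n] [DecidableEq n] [CommRing R]

theorem aeval_det_mvPolynomialXOn [CommRing S] [Algebra R S] {s : Set (n × n)} {A : Matrix n n S}
    (hA : ∀ i j, (i, j) ∉ s → A i j = 0) :
    MvPolynomial.aeval (fun p : s => A p.1.1 p.1.2) (mvPolynomialXOn R s).det = A.det := by
  rw [AlgHom.map_det, AlgHom.mapMatrix_apply, mvPolynomialXOn_map_aeval hA]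

theorem det_permMatrix_ne_zero [Nontrivial R] (σ : Equiv.Perm n) : (σ.permMatrix R).det ≠ 0 := by
  rw [Matrix.det_permutation]
  exact ((Equiv.Perm.sign σ).isUnit.map (Int.castRingHom R)).ne_zero

theorem det_mvPolynomialXOn_ne_zero [Nontrivial R] {s : Set (n × n)} (σ : Equiv.Perm n)
    (hσ : ∀ i, (i, σ i) ∈ s) : (mvPolynomialXOn R s).det ≠ 0 := by
  intro hdet
  have permMatrix_eq_zero : ∀ i j, (i, j) ∉ s → σ.permMatrix R i j = 0 := by
    intro i j hij
    have hne : σ i ≠ j := by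
      rintro rfl
      exact hij (hσ i)
    simp [Equiv.Perm.permMatrix, PEquiv.toMatrix_apply, hne]
  apply det_permMatrix_ne_zero (R := R) σ
  rw [← aeval_det_mvPolynomialXOn (R := R) permMatrix_eq_zero, hdet, map_zero]

end GenericMatrix

theorem det_ne_zero_of_algebraicIndependent_of_perfect_matching_general {n R S : Type*}
    [Fintype n] [DecidableEq n] [CommRing R] [Nontrivial R] [CommRing S] [Algebra R S]
    (A : Matrix n n S)
    (h : AlgebraicIndependent R (fun p : {p : n × n // A p.1 p.2 ≠ 0} => A p.1.1 p.1.2))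
    (σ : Equiv.Perm n) (hσ : ∀ i, A i (σ i) ≠ 0) :
    A.det ≠ 0 := by
  let support : Set (n × n) := {p | A p.1 p.2 ≠ 0}
  have aeval_det : MvPolynomial.aeval (fun p : support => A p.1.1 p.1.2)
      (mvPolynomialXOn R support).det = A.det :=
    aeval_det_mvPolynomialXOn fun _ _ => not_not.mp
  rw [← aeval_det]
  exact (map_ne_zero_iff _ h).mpr (det_mvPolynomialXOn_ne_zero σ hσ)

/-- If the nonzero entries of a real `n × n` matrix `A` are algebraically
independent over `ℚ` and the support of `A` contains a perfect matching (a
permutation `σ` with `A i (σ i) ≠ 0` for all `i`), then `det A ≠ 0`. -/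
theorem det_ne_zero_of_algebraicIndependent_of_perfect_matching {n : ℕ}
    (A : Matrix (Fin n) (Fin n) ℝ)
    (h : AlgebraicIndependent ℚ
      (fun p : {p : Fin n × Fin n // A p.1 p.2 ≠ 0} => A p.1.1 p.1.2))
    (σ : Equiv.Perm (Fin n)) (hσ : ∀ i : Fin n, A i (σ i) ≠ 0) :
    A.det ≠ 0 :=
  det_ne_zero_of_algebraicIndependent_of_perfect_matching_general A h σ hσ
end

section
/- Let n, m be natural numbers with n ≥ 1, A an n×n complex matrix, and B an n×m complex matrix. If the pair (A,B) is controllable — i.e., the span of the columns of A^k · B for k < n equals ℂ^n — then for every complex number λ, m ≥ n − rank(A − λ·I), where I is the n×n identity matrix. In particular, m is at least the maximum geometric multiplicity of the eigenvalues of A. -/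
/-! Modulo the image of `f - μ` the endomorphism `f` acts as the scalar `μ`, so every subspace
containing that image is `f`-invariant. If `f` moves a subspace `W` around so as to span the whole
space, then already `range (f - μ) ⊔ W = ⊤`: the corank of `f - μ`, which is the geometric
multiplicity of `μ`, is at most `dim W`. -/

section Module

open Module

section Semiring

variable {R M : Type*} [Semiring R] [AddCommMonoid M] [Module R M]

/-- The reachable submodule of the pair `(f, W)` of control theory: the sum of all `f ^ k (W)`.
The inputs are encoded by the submodule `W` they generate, the range of the input matrix. -/
def reachableSubmodule (f : End R M) (W : Submodule R M) : Submodule R M :=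
  ⨆ k : ℕ, W.map (f ^ k)

theorem reachableSubmodule_le {f : End R M} {W U : Submodule R M} (hWU : W ≤ U)
    (hU : U ∈ f.invtSubmodule) : reachableSubmodule f W ≤ U :=
  iSup_le fun k ↦ (Submodule.map_mono hWU).trans <|
    Submodule.map_le_iff_le_comap.mpr (U.le_comap_pow_of_le_comap hU k)

end Semiring

section CommRing

variable {R M : Type*} [CommRing R] [AddCommGroup M] [Module R M]

theorem mem_invtSubmodule_of_range_sub_le {f : End R M} {μ : R} {U : Submodule R M}
    (hU : LinearMap.range (f - μ • (1 : End R M)) ≤ U) : U ∈ f.invtSubmodule := by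
  intro u hu
  have hrange : (f - μ • (1 : End R M)) u ∈ U := hU (LinearMap.mem_range_self _ u)
  simpa using U.add_mem hrange (U.smul_mem μ hu)

theorem reachableSubmodule_le_range_sub_sup (f : End R M) (W : Submodule R M) (μ : R) :
    reachableSubmodule f W ≤ LinearMap.range (f - μ • (1 : End R M)) ⊔ W :=
  reachableSubmodule_le le_sup_right (mem_invtSubmodule_of_range_sub_le le_sup_left)

end CommRing

theorem finrank_eigenspace_le_of_reachableSubmodule_eq_top {K V : Type*} [Field K]
    [AddCommGroup V] [Module K V] [FiniteDimensional K V] {f : End K V} {W : Submodule K V}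
    (h : reachableSubmodule f W = ⊤) (μ : K) : finrank K (f.eigenspace μ) ≤ finrank K W := by
  set g : End K V := f - μ • (1 : End K V)
  have hsup : LinearMap.range g ⊔ W = ⊤ :=
    top_unique (h.ge.trans (reachableSubmodule_le_range_sub_sup f W μ))
  have hle : finrank K V ≤ finrank K (LinearMap.range g) + finrank K W := by
    rw [← finrank_top K V, ← hsup]
    exact Submodule.finrank_add_le_finrank_add_finrank (LinearMap.range g) W
  have hker : finrank K (LinearMap.range g) + finrank K (f.eigenspace μ) = finrank K V := by
    rw [End.eigenspace_def]
    exact g.finrank_range_add_finrank_ker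
  lia

end Module

section Matrix

open Matrix Module

theorem reachableSubmodule_toLin'_range {R ι κ : Type*} [CommSemiring R] [Fintype ι] [DecidableEq ι]
    [Fintype κ] (A : Matrix ι ι R) (B : Matrix ι κ R) :
    reachableSubmodule (toLin' A) (LinearMap.range B.mulVecLin) =
      Submodule.span R {v | ∃ (k : ℕ) (j : κ), v = (A ^ k * B).col j} := by
  have hmap (k : ℕ) : (LinearMap.range B.mulVecLin).map (toLin' A ^ k) =
      Submodule.span R (Set.range (A ^ k * B).col) := by
    rw [← toLin'_pow, toLin'_apply', ← LinearMap.range_comp, ← mulVecLin_mul, range_mulVecLin]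
  simp only [reachableSubmodule, hmap, ← Submodule.span_iUnion]
  congr 1
  ext v
  simp only [Set.mem_iUnion, Set.mem_range, Set.mem_ofPred_eq, eq_comm]

theorem finrank_eigenspace_toLin' {K ι : Type*} [Field K] [Fintype ι] [DecidableEq ι]
    (A : Matrix ι ι K) (μ : K) :
    finrank K (End.eigenspace (toLin' A) μ) =
      Fintype.card ι - (A - μ • (1 : Matrix ι ι K)).rank := by
  have hsub : toLin' A - μ • (1 : End K (ι → K)) =
      (A - μ • (1 : Matrix ι ι K)).mulVecLin := by
    rw [← toLin'_apply', map_sub, map_smul, toLin'_one]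
    rfl
  have hrank := (A - μ • (1 : Matrix ι ι K)).mulVecLin.finrank_range_add_finrank_ker
  rw [finrank_fintype_fun_eq_card] at hrank
  rw [End.eigenspace_def, hsub, Matrix.rank]
  lia

theorem controllable_ge_geometric_multiplicity_general {K ι κ : Type*} [Field K] [Fintype ι]
    [DecidableEq ι] [Fintype κ] (A : Matrix ι ι K) (B : Matrix ι κ K)
    (hctrl : Submodule.span K {v | ∃ (k : ℕ) (j : κ), v = (A ^ k * B).col j} = ⊤) :
    (∀ μ : K, Fintype.card ι - (A - μ • (1 : Matrix ι ι K)).rank ≤ B.rank) ∧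
      sSup {d : ℕ | ∃ μ : K, d = Fintype.card ι - (A - μ • (1 : Matrix ι ι K)).rank} ≤
        B.rank := by
  have hmult (μ : K) : Fintype.card ι - (A - μ • (1 : Matrix ι ι K)).rank ≤ B.rank := by
    rw [← finrank_eigenspace_toLin']
    rw [← reachableSubmodule_toLin'_range] at hctrl
    exact finrank_eigenspace_le_of_reachableSubmodule_eq_top hctrl μ
  refine ⟨hmult, csSup_le' ?_⟩
  rintro _ ⟨μ, rfl⟩
  exact hmult μ

end Matrix

/-- If the pair `(A, B)` is controllable (the span of the columns of
`A ^ k * B` for `k < n` is all of `ℂ^n`), then for every `λ ∈ ℂ` one has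
`m ≥ n - rank (A - λ • 1)`; in particular, `m` is at least the maximum
geometric multiplicity of the eigenvalues of `A`. -/
theorem controllable_ge_geometric_multiplicity {n m : ℕ} (hn : 1 ≤ n)
    (A : Matrix (Fin n) (Fin n) ℂ) (B : Matrix (Fin n) (Fin m) ℂ)
    (hctrl : Submodule.span ℂ {v : Fin n → ℂ | ∃ (k : ℕ) (j : Fin m),
        k < n ∧ v = fun i => (A ^ k * B) i j} = ⊤) :
    (∀ lam : ℂ, n - (A - lam • (1 : Matrix (Fin n) (Fin n) ℂ)).rank ≤ m) ∧
      sSup {d : ℕ | ∃ lam : ℂ,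
        d = n - (A - lam • (1 : Matrix (Fin n) (Fin n) ℂ)).rank} ≤ m := by
  have h := controllable_ge_geometric_multiplicity_general A B <| top_unique <|
    hctrl.ge.trans <| Submodule.span_mono fun _ ⟨k, j, _, hv⟩ ↦ ⟨k, j, hv⟩
  rw [Fintype.card_fin] at h
  exact h.imp (fun hmult lam ↦ (hmult lam).trans B.rank_le_width) (·.trans B.rank_le_width)
end

section
/- Let n be a natural number with n ≥ 1 and A an n×n complex matrix. The minimum natural number m for which there exists an n×m complex matrix B making the pair (A,B) controllable — i.e., the span of the columns of A^k · B for k < n equals ℂ^n — is exactly the maximum over all complex numbers λ of n − rank(A − λ·I), i.e., the maximum geometric multiplicity of the eigenvalues of A. -/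
/-!
Modulo `range (f - μ)` the endomorphism `f` acts as the scalar `μ`, so `f ^ k` applied to the input
vectors produces nothing new there: the `m` input vectors alone must span the quotient, whose
dimension is the geometric multiplicity of `μ`. Conversely, for each eigenvalue `μ` choose `m`
vectors spanning the quotient by `range (f - μ)`, and glue these choices into one family with
Lagrange polynomials in `f`. The invariant subspace `W` generated by that family satisfies
`range (f - μ) ⊔ W = ⊤` for every root `μ` of the characteristic polynomial; composing the factors
`f - μ` and applying Cayley–Hamilton gives `W = ⊤`.
-/

open Module Polynomial Submodule

section Semiring

variable {R M ι : Type*} [Semiring R] [AddCommMonoid M] [Module R M]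

/-- The controllable subspace of the pair `(f, b)`: the span of the orbits under `f` of the input
vectors `b j`. All powers of `f` are allowed, which makes the `f`-invariance immediate; see
`span_pow_apply_lt_finrank_eq_controllableSubspace` for the truncation below the dimension. -/
def controllableSubspace (f : End R M) (b : ι → M) : Submodule R M :=
  span R {v | ∃ (k : ℕ) (j : ι), v = (f ^ k) (b j)}

theorem pow_apply_mem_controllableSubspace (f : End R M) (b : ι → M) (k : ℕ) (j : ι) :
    (f ^ k) (b j) ∈ controllableSubspace f b :=
  subset_span ⟨k, j, rfl⟩

theorem span_range_le_controllableSubspace (f : End R M) (b : ι → M) :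
    span R (Set.range b) ≤ controllableSubspace f b := by
  rw [span_le]
  rintro _ ⟨j, rfl⟩
  exact pow_apply_mem_controllableSubspace f b 0 j

theorem controllableSubspace_mem_invtSubmodule (f : End R M) (b : ι → M) :
    controllableSubspace f b ∈ f.invtSubmodule := by
  rw [End.mem_invtSubmodule, controllableSubspace, span_le]
  rintro _ ⟨k, j, rfl⟩
  rw [SetLike.mem_coe, mem_comap, ← End.mul_apply, ← pow_succ']
  exact pow_apply_mem_controllableSubspace f b (k + 1) j

theorem controllableSubspace_le {f : End R M} {b : ι → M} {W : Submodule R M}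
    (hW : W ∈ f.invtSubmodule) (hb : ∀ j, b j ∈ W) : controllableSubspace f b ≤ W := by
  rw [controllableSubspace, span_le]
  rintro _ ⟨k, j, rfl⟩
  exact End.pow_apply_mem_of_forall_mem k hW (b j) (hb j)

end Semiring

section CommRing

variable {R M ι : Type*} [CommRing R] [AddCommGroup M] [Module R M]

theorem pow_apply_mem_span_lt_finrank [Module.Free R M] [Module.Finite R M] [Nontrivial R]
    (f : End R M) (v : M) (k : ℕ) :
    (f ^ k) v ∈ span R {w | ∃ i < finrank R M, w = (f ^ i) v} := by
  rw [f.pow_eq_aeval_mod_charpoly k, aeval_eq_sum_range, LinearMap.sum_apply]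
  refine sum_mem fun i _ ↦ ?_
  by_cases hi : i < finrank R M
  · exact smul_mem _ _ (subset_span ⟨i, hi, rfl⟩)
  · have hcoeff : (X ^ k %ₘ f.charpoly).coeff i = 0 := by
      refine coeff_eq_zero_of_degree_lt ((degree_modByMonic_lt _ f.charpoly_monic).trans_le ?_)
      rw [degree_eq_natDegree f.charpoly_monic.ne_zero, f.charpoly_natDegree]
      exact_mod_cast not_lt.mp hi
    simp [hcoeff]

theorem span_pow_apply_lt_finrank_eq_controllableSubspace
    [Module.Free R M] [Module.Finite R M] [Nontrivial R] (f : End R M) (b : ι → M) :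
    span R {v | ∃ (k : ℕ) (j : ι), k < finrank R M ∧ v = (f ^ k) (b j)} =
      controllableSubspace f b := by
  apply le_antisymm
  · exact span_mono fun _ ⟨k, j, _, hv⟩ ↦ ⟨k, j, hv⟩
  · rw [controllableSubspace, span_le]
    rintro _ ⟨k, j, rfl⟩
    have horbit : {w | ∃ i < finrank R M, w = (f ^ i) (b j)} ⊆
        {v | ∃ (i : ℕ) (j : ι), i < finrank R M ∧ v = (f ^ i) (b j)} :=
      fun _ ⟨i, hi, hw⟩ ↦ ⟨i, j, hi, hw⟩
    exact span_mono horbit (pow_apply_mem_span_lt_finrank f (b j) k)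

theorem mem_invtSubmodule_of_range_sub_smul_one_le {f : End R M} {μ : R} {W : Submodule R M}
    (hW : LinearMap.range (f - μ • (1 : End R M)) ≤ W) : W ∈ f.invtSubmodule := by
  intro v hv
  have hfv : f v = (f - μ • (1 : End R M)) v + μ • v := by
    simp
  rw [mem_comap, hfv]
  exact add_mem (hW (LinearMap.mem_range_self _ v)) (smul_mem _ _ hv)

theorem range_sub_smul_one_sup_span_eq_top {f : End R M} {b : ι → M}
    (h : controllableSubspace f b = ⊤) (μ : R) :
    LinearMap.range (f - μ • (1 : End R M)) ⊔ span R (Set.range b) = ⊤ := by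
  rw [eq_top_iff, ← h]
  exact controllableSubspace_le (mem_invtSubmodule_of_range_sub_smul_one_le le_sup_left)
    fun j ↦ mem_sup_right (subset_span ⟨j, rfl⟩)

theorem range_aeval_prod_X_sub_C_sup_eq_top {f : End R M} {W : Submodule R M}
    (hW : W ∈ f.invtSubmodule) (s : Multiset R)
    (h : ∀ μ ∈ s, LinearMap.range (f - μ • (1 : End R M)) ⊔ W = ⊤) :
    LinearMap.range (aeval f (s.map (X - C ·)).prod) ⊔ W = ⊤ := by
  induction s using Multiset.induction_on with
  | empty => simp [End.one_eq_id]
  | cons μ s ih =>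
    set g := f - μ • (1 : End R M) with hg
    set p := (s.map (X - C ·)).prod
    have hgW : W.map g ≤ W := by
      rintro _ ⟨w, hw, rfl⟩
      have hfw : f w ∈ W := hW hw
      simpa [hg] using sub_mem hfw (smul_mem W μ hw)
    have hp : LinearMap.range (aeval f p) ⊔ W = ⊤ :=
      ih fun ν hν ↦ h ν (Multiset.mem_cons_of_mem hν)
    have hmul : aeval f ((μ ::ₘ s).map (X - C ·)).prod = g ∘ₗ aeval f p := by
      simp [hg, p, End.mul_eq_comp, Algebra.algebraMap_eq_smul_one]
    rw [hmul, LinearMap.range_comp]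
    calc (LinearMap.range (aeval f p)).map g ⊔ W
      _ = (LinearMap.range (aeval f p) ⊔ W).map g ⊔ W := by
        rw [Submodule.map_sup, sup_assoc, sup_eq_right.mpr hgW]
      _ = LinearMap.range g ⊔ W := by rw [hp, Submodule.map_top]
      _ = ⊤ := h μ (Multiset.mem_cons_self μ s)

theorem aeval_apply_sub_eval_smul_mem_range (f : End R M) (p : R[X]) (μ : R) (v : M) :
    aeval f p v - p.eval μ • v ∈ LinearMap.range (f - μ • (1 : End R M)) := by
  obtain ⟨q, hq⟩ := X_sub_C_dvd_sub_C_eval (p := p) (a := μ)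
  refine ⟨aeval f q v, ?_⟩
  simpa [Algebra.algebraMap_eq_smul_one] using congrArg (aeval f · v) hq.symm

end CommRing

section DivisionRing

variable {K V : Type*} [DivisionRing K] [AddCommGroup V] [Module K V]

theorem exists_sup_span_range_eq_top (W : Submodule K V) [FiniteDimensional K (V ⧸ W)] {m : ℕ}
    (h : finrank K (V ⧸ W) ≤ m) : ∃ b : Fin m → V, W ⊔ span K (Set.range b) = ⊤ := by
  let c := finBasis K (V ⧸ W)
  let c' : Fin m → V ⧸ W := Function.extend (Fin.castLE h) c 0
  obtain ⟨b, hb⟩ : ∃ b : Fin m → V, W.mkQ ∘ b = c' := W.mkQ_surjective.comp_left c'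
  have hc : Set.range c ⊆ Set.range c' := by
    rintro _ ⟨i, rfl⟩
    exact ⟨Fin.castLE h i, (Fin.castLE_injective h).extend_apply c 0 i⟩
  refine ⟨b, ?_⟩
  rw [← map_mkQ_eq_top, map_span, ← Set.range_comp, hb, eq_top_iff, ← c.span_eq]
  exact span_mono hc

theorem finrank_quotient_range_eq_finrank_ker [FiniteDimensional K V] (f : End K V) :
    finrank K (V ⧸ LinearMap.range f) = finrank K (LinearMap.ker f) := by
  have := finrank_quotient_add_finrank (LinearMap.range f)
  have := f.finrank_range_add_finrank_ker
  omega

end DivisionRing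

section Field

variable {K V : Type*} [Field K] [AddCommGroup V] [Module K V]

theorem exists_forall_sub_mem_range_sub_smul_one (f : End K V) (s : Finset K) (v : K → V) :
    ∃ w, ∀ μ ∈ s, w - v μ ∈ LinearMap.range (f - μ • (1 : End K V)) := by
  classical
  let L (ν : K) : K[X] := Lagrange.basis s id ν
  refine ⟨∑ ν ∈ s, aeval f (L ν) (v ν), fun μ hμ ↦ ?_⟩
  have hv : v μ = ∑ ν ∈ s, (L ν).eval μ • v ν := by
    rw [Finset.sum_eq_single_of_mem μ hμ fun ν _ hν ↦ ?_]
    · have hself : (L μ).eval μ = 1 := Lagrange.eval_basis_self Function.injective_id.injOn hμ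
      rw [hself, one_smul]
    · have hne : (L ν).eval μ = 0 := Lagrange.eval_basis_of_ne (v := id) hν hμ
      rw [hne, zero_smul]
  rw [hv, ← Finset.sum_sub_distrib]
  exact sum_mem fun ν _ ↦ aeval_apply_sub_eval_smul_mem_range f (L ν) μ (v ν)

variable [FiniteDimensional K V]

theorem eq_top_of_forall_root_range_sub_smul_one_sup_eq_top {f : End K V}
    (hf : f.charpoly.Splits) {W : Submodule K V} (hW : W ∈ f.invtSubmodule)
    (h : ∀ μ ∈ f.charpoly.roots, LinearMap.range (f - μ • (1 : End K V)) ⊔ W = ⊤) :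
    W = ⊤ := by
  have hprod := range_aeval_prod_X_sub_C_sup_eq_top hW f.charpoly.roots h
  rwa [← hf.eq_prod_roots_of_monic f.charpoly_monic, f.aeval_self_charpoly, LinearMap.range_zero,
    bot_sup_eq] at hprod

theorem finrank_eigenspace_le_of_controllableSubspace_eq_top {f : End K V} {m : ℕ}
    {b : Fin m → V} (h : controllableSubspace f b = ⊤) (μ : K) :
    finrank K (f.eigenspace μ) ≤ m := by
  let U : Submodule K V := LinearMap.range (f - μ • (1 : End K V))
  have hspan : (span K (Set.range b)).map U.mkQ = ⊤ := by
    rw [map_mkQ_eq_top]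
    exact range_sub_smul_one_sup_span_eq_top h μ
  calc finrank K (f.eigenspace μ)
    _ = finrank K (V ⧸ U) := by
      rw [End.eigenspace_def, finrank_quotient_range_eq_finrank_ker]
    _ = finrank K ((span K (Set.range b)).map U.mkQ) := by rw [hspan, finrank_top]
    _ ≤ finrank K (span K (Set.range b)) := finrank_map_le _ _
    _ ≤ m := by simpa [Set.finrank] using finrank_range_le_card (R := K) b

theorem exists_controllableSubspace_eq_top {f : End K V} (hf : f.charpoly.Splits) {m : ℕ}
    (h : ∀ μ, finrank K (f.eigenspace μ) ≤ m) :
    ∃ b : Fin m → V, controllableSubspace f b = ⊤ := by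
  classical
  let U (μ : K) : Submodule K V := LinearMap.range (f - μ • (1 : End K V))
  have hlocal (μ : K) : ∃ c : Fin m → V, U μ ⊔ span K (Set.range c) = ⊤ :=
    exists_sup_span_range_eq_top (U μ) <| by
      rw [finrank_quotient_range_eq_finrank_ker, ← End.eigenspace_def]
      exact h μ
  choose c hc using hlocal
  choose b hb using fun j ↦
    exists_forall_sub_mem_range_sub_smul_one f f.charpoly.roots.toFinset (c · j)
  refine ⟨b, eq_top_of_forall_root_range_sub_smul_one_sup_eq_top hf
    (controllableSubspace_mem_invtSubmodule f b) fun μ hμ ↦ ?_⟩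
  rw [eq_top_iff, ← hc μ]
  refine sup_le le_sup_left (span_le.mpr ?_)
  rintro _ ⟨j, rfl⟩
  have hbj : b j ∈ controllableSubspace f b :=
    span_range_le_controllableSubspace f b (subset_span ⟨j, rfl⟩)
  rw [← sub_sub_cancel (b j) (c μ j)]
  exact sub_mem (mem_sup_right hbj) (mem_sup_left (hb j μ (Multiset.mem_toFinset.mpr hμ)))

theorem exists_controllableSubspace_eq_top_iff {f : End K V} (hf : f.charpoly.Splits) {m : ℕ} :
    (∃ b : Fin m → V, controllableSubspace f b = ⊤) ↔ ∀ μ, finrank K (f.eigenspace μ) ≤ m :=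
  ⟨fun ⟨_, hb⟩ ↦ finrank_eigenspace_le_of_controllableSubspace_eq_top hb,
    exists_controllableSubspace_eq_top hf⟩

end Field

section Matrix

variable {n : Type*} [Fintype n] [DecidableEq n]

theorem span_pow_mul_eq_controllableSubspace {R : Type*} [CommRing R] [Nontrivial R] {m : Type*}
    (A : Matrix n n R) (B : Matrix n m R) :
    span R {v : n → R | ∃ (k : ℕ) (j : m),
      k < Fintype.card n ∧ v = fun i ↦ (A ^ k * B) i j} =
      controllableSubspace A.toLin' B.col := by
  have hcol (k : ℕ) (j : m) : (fun i ↦ (A ^ k * B) i j) = (A.toLin' ^ k) (B.col j) := by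
    rw [← Matrix.toLin'_pow, Matrix.toLin'_apply]
    rfl
  simp only [hcol]
  rw [← span_pow_apply_lt_finrank_eq_controllableSubspace, finrank_fintype_fun_eq_card]

theorem sub_rank_sub_smul_one_eq_finrank_eigenspace {K : Type*} [Field K]
    (A : Matrix n n K) (μ : K) :
    Fintype.card n - (A - μ • (1 : Matrix n n K)).rank = finrank K (End.eigenspace A.toLin' μ) := by
  have hsub : A.toLin' - μ • (1 : End K (n → K)) = (A - μ • 1).toLin' := by
    rw [map_sub, map_smul, Matrix.toLin'_one, End.one_eq_id]
  have hrank := (A - μ • 1).toLin'.finrank_range_add_finrank_ker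
  rw [finrank_fintype_fun_eq_card] at hrank
  rw [End.eigenspace_def, hsub, Matrix.rank, ← Matrix.toLin'_apply']
  omega

theorem exists_span_pow_mul_eq_top_iff {K : Type*} [Field K] {A : Matrix n n K}
    (hA : A.charpoly.Splits) {m : ℕ} :
    (∃ B : Matrix n (Fin m) K,
        span K {v : n → K | ∃ (k : ℕ) (j : Fin m),
          k < Fintype.card n ∧ v = fun i ↦ (A ^ k * B) i j} = ⊤) ↔
      ∀ μ : K, Fintype.card n - (A - μ • (1 : Matrix n n K)).rank ≤ m := by
  simp only [span_pow_mul_eq_controllableSubspace, sub_rank_sub_smul_one_eq_finrank_eigenspace]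
  rw [← exists_controllableSubspace_eq_top_iff (by rwa [Matrix.charpoly_toLin'])]
  exact ⟨fun ⟨B, hB⟩ ↦ ⟨B.col, hB⟩, fun ⟨b, hb⟩ ↦ ⟨Matrix.of fun i j ↦ b j i, hb⟩⟩

theorem min_controllers_eq_max_geometric_multiplicity_general {K : Type*} [Field K]
    (A : Matrix n n K) (hA : A.charpoly.Splits) :
    IsLeast {m : ℕ | ∃ B : Matrix n (Fin m) K,
        span K {v : n → K | ∃ (k : ℕ) (j : Fin m),
          k < Fintype.card n ∧ v = fun i ↦ (A ^ k * B) i j} = ⊤}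
      (sSup {d : ℕ | ∃ μ : K, d = Fintype.card n - (A - μ • (1 : Matrix n n K)).rank}) := by
  set D : Set ℕ := {d : ℕ | ∃ μ : K, d = Fintype.card n - (A - μ • (1 : Matrix n n K)).rank}
  have hD_bdd : BddAbove D := ⟨Fintype.card n, by rintro _ ⟨μ, rfl⟩; exact Nat.sub_le _ _⟩
  have hD_lub : IsLUB D (sSup D) := isLUB_csSup ⟨_, 0, rfl⟩ hD_bdd
  constructor
  · exact (exists_span_pow_mul_eq_top_iff hA).mpr fun μ ↦ hD_lub.1 ⟨μ, rfl⟩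
  · intro m hm
    refine hD_lub.2 ?_
    rintro _ ⟨μ, rfl⟩
    exact (exists_span_pow_mul_eq_top_iff hA).mp hm μ

end Matrix

/-- Exact controllability theory: the minimum number `m` of columns of a matrix
`B` making the pair `(A, B)` controllable (the span of the columns of
`A ^ k * B` for `k < n` is all of `ℂ^n`) equals the maximum over `λ ∈ ℂ` of
`n - rank (A - λ • 1)`, i.e. the maximum geometric multiplicity of the
eigenvalues of `A`. -/
theorem min_controllers_eq_max_geometric_multiplicity {n : ℕ} (hn : 1 ≤ n)
    (A : Matrix (Fin n) (Fin n) ℂ) :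
    sInf {m : ℕ | ∃ B : Matrix (Fin n) (Fin m) ℂ,
        Submodule.span ℂ {v : Fin n → ℂ | ∃ (k : ℕ) (j : Fin m),
          k < n ∧ v = fun i => (A ^ k * B) i j} = ⊤}
      = sSup {d : ℕ | ∃ lam : ℂ,
          d = n - (A - lam • (1 : Matrix (Fin n) (Fin n) ℂ)).rank} := by
  simpa only [Fintype.card_fin] using
    (min_controllers_eq_max_geometric_multiplicity_general A (IsAlgClosed.splits _)).csInf_eq
end
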